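/- Let n ≥ 1 be an integer and θ > 0 a real number. Under the record-biased distribution with parameter θ on permutations of [n], for every i ∈ [n], the probability that there is a record at position i equals θ/(θ+i−1). Equivalently, ∑_{σ ∈ S_n, i is a record of σ} θ^{rec(σ)} = (θ/(θ+i−1)) · θ^{(n)}. -/

import Mathlib

/-!
A permutation of `Fin (n + 1)` is determined by its value `p` at the last position and the
permutation `e` of `Fin n` that is order-isomorphic to its restriction to the first `n` positions
(`insertLast`). The records of the large permutation at the first `n` positions are exactly those
of `e`, and the last position is a record exactly when `p` is the maximum, which is one choice out
of `n + 1`. Hence the record indicators are independent, in the form of the generating function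
identity `sum_prod_record`: if position `k` (counted from `0`) carries the factor `a k` when it is
a record and `b k` otherwise, then the total weight is `∏ k < n, (a k + k * b k)`.

Taking `a = θ` and `b = 1`, except for `b = 0` at the prescribed position, yields the weight of the
permutations with a record there: the factor `θ + i - 1` of the rising factorial is replaced by `θ`.
-/

/-- The number of records of a permutation of `Fin n`. -/
def recs {n : ℕ} (σ : Equiv.Perm (Fin n)) : ℕ :=
  (Finset.univ.filter fun i : Fin n => ∀ j < i, σ j < σ i).card

/-- The permutation of `Fin (n + 1)` whose value at the last position is `p` and whose first `n`
values are in the same relative order as those of `e`. -/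
def insertLast {n : ℕ} (p : Fin (n + 1)) (e : Equiv.Perm (Fin n)) : Equiv.Perm (Fin (n + 1)) :=
  finSuccEquivLast.trans ((Equiv.optionCongr e).trans (finSuccEquiv' p).symm)

lemma insertLast_last {n : ℕ} (p : Fin (n + 1)) (e : Equiv.Perm (Fin n)) :
    insertLast p e (Fin.last n) = p := by
  simp [insertLast]

lemma insertLast_castSucc {n : ℕ} (p : Fin (n + 1)) (e : Equiv.Perm (Fin n)) (j : Fin n) :
    insertLast p e j.castSucc = p.succAbove (e j) := by
  simp [insertLast]

lemma insertLast_bijective (n : ℕ) :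
    Function.Bijective
      (fun x : Fin (n + 1) × Equiv.Perm (Fin n) => insertLast x.1 x.2) := by
  rw [Fintype.bijective_iff_injective_and_card]
  refine ⟨?_, by simp [Fintype.card_perm, Nat.factorial_succ]⟩
  rintro ⟨p, e⟩ ⟨q, f⟩ h
  have hpq : p = q := by
    simpa [insertLast_last] using DFunLike.congr_fun h (Fin.last n)
  subst hpq
  have hef : e = f := by
    ext j : 1
    simpa [insertLast_castSucc] using DFunLike.congr_fun h j.castSucc
  rw [hef]

lemma record_insertLast_castSucc {n : ℕ} (p : Fin (n + 1)) (e : Equiv.Perm (Fin n)) (i : Fin n) :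
    (∀ j < i.castSucc, insertLast p e j < insertLast p e i.castSucc) ↔ ∀ j < i, e j < e i := by
  constructor
  · intro h j hj
    simpa [insertLast_castSucc] using h j.castSucc (by simpa using hj)
  · intro h j hj
    induction j using Fin.lastCases with
    | last => exact absurd hj (not_lt.2 (Fin.le_last _))
    | cast j => simpa [insertLast_castSucc] using h j (by simpa using hj)

lemma record_insertLast_last {n : ℕ} (p : Fin (n + 1)) (e : Equiv.Perm (Fin n)) :
    (∀ j < Fin.last n, insertLast p e j < insertLast p e (Fin.last n)) ↔ p = Fin.last n := by
  constructor
  · intro h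
    by_contra hp
    -- The maximal value occurs at some position other than the last one.
    obtain ⟨j, hj⟩ := (insertLast p e).surjective (Fin.last n)
    have hjl : j ≠ Fin.last n := by
      rintro rfl
      exact hp (by rw [← hj, insertLast_last])
    have := h j (Fin.lt_last_iff_ne_last.2 hjl)
    rw [hj] at this
    exact absurd this (not_lt.2 (Fin.le_last _))
  · rintro rfl j hj
    induction j using Fin.lastCases with
    | last => exact absurd hj (lt_irrefl _)
    | cast j => simp [insertLast_castSucc, insertLast_last, Fin.castSucc_lt_last]

/-- Joint generating function of the record indicators; its product form expresses that they are
independent, position `k` being a record for one of `k + 1` equally likely relative ranks. -/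
lemma sum_prod_record (a b : ℕ → ℝ) (n : ℕ) :
    ∑ σ : Equiv.Perm (Fin n), ∏ i : Fin n, (if ∀ j < i, σ j < σ i then a i else b i)
      = ∏ k ∈ Finset.range n, (a k + k * b k) := by
  induction n with
  | zero => simp
  | succ n ih =>
    rw [← (insertLast_bijective n).sum_comp, Fintype.sum_prod_type]
    simp only [Fin.prod_univ_castSucc, record_insertLast_castSucc, record_insertLast_last,
      Fin.val_castSucc, Fin.val_last]
    simp only [← Finset.sum_mul, ih]
    rw [← Finset.mul_sum, Finset.prod_range_succ, Fin.sum_univ_castSucc]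
    simp [(Fin.castSucc_lt_last _).ne, add_comm]

lemma ascPochhammer_eval_eq_prod (n : ℕ) (θ : ℝ) :
    (ascPochhammer ℝ n).eval θ = ∏ k ∈ Finset.range n, (θ + k) := by
  induction n with
  | zero => simp
  | succ n ih => rw [ascPochhammer_succ_eval, ih, Finset.prod_range_succ]

/-- Under the record-biased distribution with parameter `θ` on permutations of `[n]`,
for every `i ∈ [n]` (1-based, represented by the index `i - 1` in `Fin n`), the
probability of a record at position `i` is `θ / (θ + i − 1)`; equivalently the
weighted sum over permutations having a record at position `i` equals
`(θ / (θ + i − 1)) · θ^{(n)}`. -/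
theorem record_position_prob (n : ℕ) (θ : ℝ) (hθ : 0 < θ)
    (i : ℕ) (hi1 : 1 ≤ i) (hin : i ≤ n) :
    ∑ σ ∈ Finset.univ.filter (fun σ : Equiv.Perm (Fin n) =>
        ∀ j < (⟨i - 1, by omega⟩ : Fin n), σ j < σ ⟨i - 1, by omega⟩),
      θ ^ recs σ
      = θ / (θ + i - 1) * (ascPochhammer ℝ n).eval θ := by
  obtain ⟨m, rfl⟩ : ∃ m, i = m + 1 := ⟨i - 1, by omega⟩
  simp only [Nat.add_sub_cancel]
  have hm : m ∈ Finset.range n := Finset.mem_range.2 (by omega)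
  -- The weight `0` for a non-record at position `m` encodes the filter.
  have key := sum_prod_record (fun _ => θ) (fun k => if k = m then 0 else 1) n
  rw [Finset.sum_filter, ascPochhammer_eval_eq_prod]
  trans ∏ k ∈ Finset.range n, (θ + k * (if k = m then 0 else 1))
  · rw [← key]
    refine Finset.sum_congr rfl fun σ _ => ?_
    split_ifs with h
    · rw [recs, ← Finset.prod_const, Finset.prod_filter]
      refine Finset.prod_congr rfl fun k _ => ?_
      by_cases hk : ∀ j < k, σ j < σ k
      · simp only [if_pos hk]
      · have hkm : (k : ℕ) ≠ m := by
          rintro rfl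
          exact hk h
        simp only [if_neg hk, if_neg hkm]
    · refine (Finset.prod_eq_zero (Finset.mem_univ (⟨m, by omega⟩ : Fin n)) ?_).symm
      simp only [if_neg h, if_true]
  · rw [← Finset.mul_prod_erase _ _ hm, ← Finset.mul_prod_erase _ (fun k : ℕ => θ + (k : ℝ)) hm]
    have hne : θ + (m : ℝ) ≠ 0 := by positivity
    have hprod : ∏ k ∈ (Finset.range n).erase m, (θ + k * (if k = m then (0 : ℝ) else 1))
        = ∏ k ∈ (Finset.range n).erase m, (θ + (k : ℝ)) :=
      Finset.prod_congr rfl fun k hk => by simp [Finset.ne_of_mem_erase hk]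
    have hden : θ + ((m + 1 : ℕ) : ℝ) - 1 = θ + m := by push_cast; ring
    rw [hprod, hden, if_pos rfl, mul_zero, add_zero, ← mul_assoc, div_mul_cancel₀ _ hne]
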